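/- arXiv:1906.00191 — 2 statements merged into one kernel-verified Lean document; each statement's English description precedes it below -/
import Mathlib

section
/- Let P = B ∪ R be a 1-avoiding point set in general position with |B| = |R| = n, where B and R are separable by a line and B avoids R. Then there exists a bijection σ : B → R such that the n segments [b, σ(b)], for b ∈ B, form a stabbing family. -/
open Set

abbrev Pt : Type := ℝ × ℝ

/-- Signed area determinant of the triple `(p, q, r)`. -/
def det2 (p q r : Pt) : ℝ :=
  (q.1 - p.1) * (r.2 - p.2) - (q.2 - p.2) * (r.1 - p.1)

/-- `P` is in general position: no three distinct points of `P` are collinear. -/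
def GenPos (P : Set Pt) : Prop :=
  ∀ p ∈ P, ∀ q ∈ P, ∀ r ∈ P, p ≠ q → p ≠ r → q ≠ r →
    ¬ Collinear ℝ ({p, q, r} : Set Pt)

/-- `A` and `B` can be separated by a line. -/
def LineSeparated (A B : Set Pt) : Prop :=
  ∃ a b c : ℝ, (a, b) ≠ ((0 : ℝ), (0 : ℝ)) ∧
    (∀ p ∈ A, a * p.1 + b * p.2 < c) ∧ (∀ p ∈ B, c < a * p.1 + b * p.2)

/-- `A` avoids `B`: no line through two distinct points of `A` meets the convex hull
of `B`. -/
def Avoids (A B : Set Pt) : Prop :=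
  ∀ p ∈ A, ∀ q ∈ A, p ≠ q → ∀ x ∈ convexHull ℝ B, det2 p q x ≠ 0

/-- `B ∪ R` is a `1`-avoiding point set with colour classes of size `n`. -/
def OneAvoiding (n : ℕ) (B R : Finset Pt) : Prop :=
  Disjoint B R ∧ B.card = n ∧ R.card = n ∧ GenPos (↑B ∪ ↑R) ∧ LineSeparated ↑B ↑R ∧
    Avoids ↑B ↑R

/-- The line through the two points `p` and `q`. -/
def lineThrough (p q : Pt) : Set Pt := {z | det2 p q z = 0}

theorem det2_antisymm (p q z : Pt) : det2 q p z = - det2 p q z := by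
  simp only [det2]; ring

theorem lineThrough_symm (p q : Pt) : lineThrough p q = lineThrough q p := by
  ext z
  simp only [lineThrough, Set.mem_setOf_eq]
  rw [det2_antisymm p q z, neg_eq_zero]

/-- The open segment (relative interior) of an unordered pair of points. -/
def segOpen : Sym2 Pt → Set Pt :=
  Sym2.lift ⟨fun p q => openSegment ℝ p q, fun p q => openSegment_symm ℝ p q⟩

/-- The line through the two endpoints of an unordered pair of points. -/
def segLine : Sym2 Pt → Set Pt :=
  Sym2.lift ⟨fun p q => lineThrough p q, fun p q => lineThrough_symm p q⟩

/-- `F` is a stabbing family: a finite set of nondegenerate segments, all of whose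
endpoints are distinct, such that for every two distinct segments `e` and `f`, the line
through the endpoints of `e` meets the open segment of `f`, or the line through the
endpoints of `f` meets the open segment of `e`. -/
def IsStabbingFamily (F : Finset (Sym2 Pt)) : Prop :=
  (∀ s ∈ F, ¬ s.IsDiag) ∧
  (∀ s ∈ F, ∀ t ∈ F, s ≠ t → ∀ x ∈ s, ∀ y ∈ t, x ≠ y) ∧
  (∀ s ∈ F, ∀ t ∈ F, s ≠ t →
    (segLine s ∩ segOpen t).Nonempty ∨ (segLine t ∩ segOpen s).Nonempty)

/-- Among points strictly on one side of a line through `p`, one comes first in angular order. -/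
theorem exists_first (S : Finset Pt) (hS : S.Nonempty) (p : Pt) (a b : ℝ)
    (hf : ∀ s ∈ S, 0 < a * (s.1 - p.1) + b * (s.2 - p.2)) :
    ∃ m ∈ S, ∀ s ∈ S, 0 ≤ det2 p m s := by
  obtain ⟨m, hm, hmin⟩ := S.exists_min_image
    (fun s => (-b * (s.1 - p.1) + a * (s.2 - p.2)) / (a * (s.1 - p.1) + b * (s.2 - p.2))) hS
  refine ⟨m, hm, fun s hs => ?_⟩
  have h := hmin s hs
  have hfm := hf m hm
  have hfs := hf s hs
  rw [div_le_div_iff₀ hfm hfs] at h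
  have hab : 0 < a ^ 2 + b ^ 2 := by
    rcases eq_or_ne a 0 with ha | ha
    · rcases eq_or_ne b 0 with hb | hb
      · simp [ha, hb] at hfm
      · positivity
    · positivity
  have key : 0 ≤ (a ^ 2 + b ^ 2) * det2 p m s := by
    simp only [det2]
    linarith
  exact nonneg_of_mul_nonneg_right key hab

/-- The line `p q` meets the open segment between points on opposite sides. -/
theorem stab_of_opposite (p q x y : Pt) (hx : det2 p q x < 0) (hy : 0 < det2 p q y) :
    (lineThrough p q ∩ openSegment ℝ x y).Nonempty := by
  have hd : 0 < det2 p q y - det2 p q x := by linarith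
  refine ⟨(det2 p q y / (det2 p q y - det2 p q x)) • x +
    (-det2 p q x / (det2 p q y - det2 p q x)) • y, ?_, _, _, div_pos hy hd,
    div_pos (by linarith) hd, ?_, rfl⟩
  · obtain ⟨u, hu⟩ : ∃ u, u = det2 p q y / (det2 p q y - det2 p q x) := ⟨_, rfl⟩
    obtain ⟨v, hv⟩ : ∃ v, v = -det2 p q x / (det2 p q y - det2 p q x) := ⟨_, rfl⟩
    have huv : u + v = 1 := by rw [hu, hv]; field_simp; ring
    have hz : u * det2 p q x + v * det2 p q y = 0 := by rw [hu, hv]; field_simp; ring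
    rw [← hu, ← hv]
    have hu1 : u = 1 - v := by linarith
    subst hu1
    simp only [lineThrough, Set.mem_setOf_eq, det2, Prod.fst_add, Prod.snd_add, Prod.smul_fst,
      Prod.smul_snd, smul_eq_mul] at hz ⊢
    linarith
  · field_simp; ring

theorem collinear_of_det2 (p q r : Pt) (hpq : p ≠ q) (h : det2 p q r = 0) :
    Collinear ℝ ({p, q, r} : Set Pt) := by
  rw [collinear_iff_of_mem (p₀ := p) (by simp)]
  refine ⟨q - p, ?_⟩
  simp only [det2] at h
  rintro x (rfl | rfl | rfl)
  · exact ⟨0, by simp⟩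
  · exact ⟨1, by simp⟩
  · by_cases h1 : q.1 - p.1 = 0
    · have h2 : q.2 - p.2 ≠ 0 := by
        intro h2
        exact hpq (Prod.ext (by linarith) (by linarith))
      refine ⟨(x.2 - p.2) / (q.2 - p.2), Prod.ext ?_ ?_⟩
      · have : x.1 - p.1 = 0 := by
          rw [h1] at h
          have : (q.2 - p.2) * (x.1 - p.1) = 0 := by linarith
          exact (mul_eq_zero.1 this).resolve_left h2
        simp [h1]; linarith
      · simp; field_simp; ring
    · refine ⟨(x.1 - p.1) / (q.1 - p.1), Prod.ext ?_ ?_⟩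
      · simp; field_simp; ring
      · simp; field_simp; linarith

theorem matching_aux (a b c : ℝ) (n : ℕ) : ∀ B R : Finset Pt, B.card = n → R.card = n →
    (∀ p ∈ B, a * p.1 + b * p.2 < c) → (∀ p ∈ R, c < a * p.1 + b * p.2) →
    (∀ p ∈ B, ∀ q ∈ B, p ≠ q → (∀ r ∈ R, 0 < det2 p q r) ∨ (∀ r ∈ R, det2 p q r < 0)) →
    (∀ p ∈ B, ∀ q ∈ R, ∀ r ∈ R, q ≠ r → det2 p q r ≠ 0) →
    ∃ σ : Pt → Pt, Set.BijOn σ ↑B ↑R ∧ ∀ p ∈ B, ∀ q ∈ B, p ≠ q →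
      (lineThrough p (σ p) ∩ openSegment ℝ q (σ q)).Nonempty ∨
      (lineThrough q (σ q) ∩ openSegment ℝ p (σ p)).Nonempty := by
  classical
  induction n with
  | zero =>
    intro B R hB hR _ _ _ _
    rw [Finset.card_eq_zero] at hB hR
    subst hB hR
    exact ⟨id, by simp, by simp⟩
  | succ n ih =>
    intro B R hB hR hsB hsR hav hgp
    have hBne : B.Nonempty := Finset.card_pos.1 (by omega)
    have hRne : R.Nonempty := Finset.card_pos.1 (by omega)
    obtain ⟨r₀, hr₀⟩ := hRne
    obtain ⟨b₁, hb₁, hbmin⟩ := exists_first B hBne r₀ (-a) (-b) (fun s hs => by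
      have := hsB s hs
      have := hsR r₀ hr₀
      linarith)
    obtain ⟨r₁, hr₁, hrmin⟩ := exists_first R ⟨r₀, hr₀⟩ b₁ a b (fun s hs => by
      have := hsB b₁ hb₁
      have := hsR s hs
      linarith)
    have hbside : ∀ q ∈ B, b₁ ≠ q → det2 b₁ r₁ q < 0 := by
      intro q hq hne
      have h0 := hbmin q hq
      have hc : det2 b₁ q r₁ = - det2 b₁ r₁ q := by simp only [det2]; ring
      have hc' : det2 r₀ b₁ q = det2 b₁ q r₀ := by simp only [det2]; ring
      rcases hav b₁ hb₁ q hq hne with h | h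
      · have := h r₁ hr₁; linarith
      · have := h r₀ hr₀; linarith
    have hrside : ∀ r ∈ R, r₁ ≠ r → 0 < det2 b₁ r₁ r := fun r hr hne =>
      lt_of_le_of_ne (hrmin r hr) (hgp b₁ hb₁ r₁ hr₁ r hr hne).symm
    obtain ⟨σ, hσ, hst⟩ := ih (B.erase b₁) (R.erase r₁)
      (by rw [Finset.card_erase_of_mem hb₁]; omega) (by rw [Finset.card_erase_of_mem hr₁]; omega)
      (fun p hp => hsB p (Finset.mem_of_mem_erase hp))
      (fun p hp => hsR p (Finset.mem_of_mem_erase hp))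
      (fun p hp q hq hne =>
        (hav p (Finset.mem_of_mem_erase hp) q (Finset.mem_of_mem_erase hq) hne).imp
          (fun h r hr => h r (Finset.mem_of_mem_erase hr))
          (fun h r hr => h r (Finset.mem_of_mem_erase hr)))
      (fun p hp q hq r hr => hgp p (Finset.mem_of_mem_erase hp) q (Finset.mem_of_mem_erase hq) r
        (Finset.mem_of_mem_erase hr))
    have hsame : ∀ q, b₁ ≠ q → Function.update σ b₁ r₁ q = σ q := fun q hq =>
      Function.update_of_ne hq.symm _ _
    have hself : Function.update σ b₁ r₁ b₁ = r₁ := Function.update_self _ _ _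
    have hstab : ∀ q ∈ B, b₁ ≠ q →
        (lineThrough b₁ r₁ ∩ openSegment ℝ q (σ q)).Nonempty := by
      intro q hq hne
      have hm : σ q ∈ R.erase r₁ := by
        exact_mod_cast hσ.mapsTo (Finset.mem_coe.2 (Finset.mem_erase.2 ⟨hne.symm, hq⟩))
      exact stab_of_opposite _ _ _ _ (hbside q hq hne)
        (hrside _ (Finset.mem_of_mem_erase hm) (Finset.ne_of_mem_erase hm).symm)
    refine ⟨Function.update σ b₁ r₁, ?_, ?_⟩
    · have h1 : Set.BijOn (Function.update σ b₁ r₁) ↑(B.erase b₁) ↑(R.erase r₁) :=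
        hσ.congr (fun q hq => (hsame q (Finset.ne_of_mem_erase (Finset.mem_coe.1 hq)).symm).symm)
      have h2 := h1.insert (a := b₁) (by rw [hself]; simp)
      rw [hself, ← Finset.coe_insert, ← Finset.coe_insert, Finset.insert_erase hb₁,
        Finset.insert_erase hr₁] at h2
      exact h2
    · intro p hp q hq hne
      by_cases h1 : b₁ = p
      · subst h1
        rw [hself, hsame q hne]
        exact Or.inl (hstab q hq hne)
      · by_cases h2 : b₁ = q
        · subst h2
          rw [hself, hsame p h1]
          exact Or.inr (hstab p hp h1)
        · rw [hsame p h1, hsame q h2]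
          exact hst p (Finset.mem_erase.2 ⟨Ne.symm h1, hp⟩) q
            (Finset.mem_erase.2 ⟨Ne.symm h2, hq⟩) hne

open scoped Classical in
theorem oneAvoiding_exists_stabbing_perfect_matching
    (n : ℕ) (hn : 0 < n) (B R : Finset Pt) (h : OneAvoiding n B R) :
    ∃ σ : Pt → Pt, Set.BijOn σ ↑B ↑R ∧
      IsStabbingFamily (B.image fun b => s(b, σ b)) := by
  obtain ⟨hdis, hB, hR, hgp, ⟨a, b, c, -, hsB, hsR⟩, hav⟩ := h
  have hneq : ∀ p ∈ B, ∀ r ∈ R, p ≠ r := fun p hp r hr =>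
    Finset.disjoint_iff_ne.1 hdis p hp r hr
  obtain ⟨σ, hσ, hst⟩ := matching_aux a b c n B R hB hR
    (fun p hp => hsB p (Finset.mem_coe.2 hp)) (fun p hp => hsR p (Finset.mem_coe.2 hp))
    (by
      intro p hp q hq hne
      have hav' := hav p (Finset.mem_coe.2 hp) q (Finset.mem_coe.2 hq) hne
      have hseg : ∀ x ∈ R, ∀ y ∈ R, det2 p q x < 0 → 0 < det2 p q y → False := by
        intro x hx y hy h1 h2
        obtain ⟨z, hz1, hz2⟩ := stab_of_opposite p q x y h1 h2
        have hx' := subset_convexHull ℝ (↑R : Set Pt) (Finset.mem_coe.2 hx)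
        have hy' := subset_convexHull ℝ (↑R : Set Pt) (Finset.mem_coe.2 hy)
        exact hav' z ((convex_convexHull ℝ _).openSegment_subset hx' hy' hz2) hz1
      by_cases hall : ∀ r ∈ R, 0 < det2 p q r
      · exact Or.inl hall
      · right
        push Not at hall
        obtain ⟨x, hx, hx0⟩ := hall
        have hnz : ∀ r ∈ R, det2 p q r ≠ 0 := fun r hr =>
          hav' r (subset_convexHull ℝ _ (Finset.mem_coe.2 hr))
        have hx1 := lt_of_le_of_ne hx0 (hnz x hx)
        intro r hr
        by_contra hcon
        exact hseg x hx r hr hx1 (lt_of_le_of_ne (not_lt.1 hcon) (hnz r hr).symm))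
    (by
      intro p hp q hq r hr hne h0
      exact hgp p (Or.inl hp) q (Or.inr hq) r (Or.inr hr) (hneq p hp q hq) (hneq p hp r hr) hne
        (collinear_of_det2 p q r (hneq p hp q hq) h0))
  have hmem : ∀ p ∈ B, σ p ∈ R := fun p hp => by
    exact_mod_cast hσ.mapsTo (Finset.mem_coe.2 hp)
  refine ⟨σ, hσ, ?_, ?_, ?_⟩
  · intro s hs
    obtain ⟨p, hp, rfl⟩ := Finset.mem_image.1 hs
    rw [Sym2.mk_isDiag_iff]
    exact hneq p hp _ (hmem p hp)
  · intro s hs t ht hne x hx y hy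
    obtain ⟨p, hp, rfl⟩ := Finset.mem_image.1 hs
    obtain ⟨q, hq, rfl⟩ := Finset.mem_image.1 ht
    have hpq : p ≠ q := fun h => hne (by rw [h])
    rcases Sym2.mem_iff.1 hx with rfl | rfl <;> rcases Sym2.mem_iff.1 hy with rfl | rfl
    · exact hpq
    · exact hneq _ hp _ (hmem q hq)
    · exact (hneq _ hq _ (hmem p hp)).symm
    · exact fun h => hpq (hσ.injOn (Finset.mem_coe.2 hp) (Finset.mem_coe.2 hq) h)
  · intro s hs t ht hne
    obtain ⟨p, hp, rfl⟩ := Finset.mem_image.1 hs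
    obtain ⟨q, hq, rfl⟩ := Finset.mem_image.1 ht
    have hpq : p ≠ q := fun h => hne (by rw [h])
    exact hst p hp q hq hpq
end

section
/- For every positive integer n and every set P of 2n points in general position in the plane, there exists a partition of P into n pairs such that the n segments joining the points of each pair form a stabbing family. -/
open Set

/-- The point of the complex plane with the given coordinates (Euclidean norm). -/
def toC (p : Pt) : ℂ := ⟨p.1, p.2⟩

theorem det2_ne_zero_of_genPos {P : Set Pt} (h : GenPos P) {p q r : Pt}
    (hp : p ∈ P) (hq : q ∈ P) (hr : r ∈ P) (hpq : p ≠ q) (hpr : p ≠ r) (hqr : q ≠ r) :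
    det2 p q r ≠ 0 := by
  intro h0
  apply h p hp q hq r hr hpq hpr hqr
  rw [collinear_iff_of_mem (p₀ := p) (by simp)]
  refine ⟨q - p, ?_⟩
  have key : ∃ t : ℝ, r = t • (q - p) +ᵥ p := by
    unfold det2 at h0
    by_cases h1 : q.1 - p.1 = 0
    · have h2 : q.2 - p.2 ≠ 0 := by
        intro h2
        exact hpq (Prod.ext (by linarith) (by linarith))
      refine ⟨(r.2 - p.2) / (q.2 - p.2), ?_⟩
      have h3 : r.1 - p.1 = 0 := by
        rw [h1] at h0
        have : (q.2 - p.2) * (r.1 - p.1) = 0 := by linarith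
        exact (mul_eq_zero.1 this).resolve_left h2
      apply Prod.ext
      · simp [h1]; linarith
      · simp; field_simp; ring
    · refine ⟨(r.1 - p.1) / (q.1 - p.1), ?_⟩
      apply Prod.ext
      · simp; field_simp; ring
      · simp; field_simp; linarith
  rintro x (rfl | rfl | rfl)
  · exact ⟨0, by simp⟩
  · exact ⟨1, by simp⟩
  · exact key

/-- If `c` and `d` are on different sides of the line `ab`, then it stabs `cd`. -/
theorem stab_of_neg {a b c d : Pt} (h : det2 a b c * det2 a b d < 0) :
    (lineThrough a b ∩ openSegment ℝ c d).Nonempty := by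
  set u := det2 a b c with hu
  set v := det2 a b d with hv
  have hne : v - u ≠ 0 := by
    intro h0
    have : v = u := by linarith
    rw [this] at h
    nlinarith [mul_self_nonneg u]
  have hpos : 0 < v / (v - u) ∧ 0 < -u / (v - u) := by
    rcases mul_neg_iff.1 h with ⟨h1, h2⟩ | ⟨h1, h2⟩
    · exact ⟨div_pos_of_neg_of_neg h2 (by linarith),
        div_pos_of_neg_of_neg (by linarith) (by linarith)⟩
    · exact ⟨div_pos h2 (by linarith), div_pos (by linarith) (by linarith)⟩
  refine ⟨(v / (v - u)) • c + (-u / (v - u)) • d, ?_, _, _, hpos.1, hpos.2, ?_, rfl⟩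
  · have e : det2 a b ((v / (v - u)) • c + (-u / (v - u)) • d)
        = (v / (v - u)) * u + (-u / (v - u)) * v
          + ((v / (v - u)) + (-u / (v - u)) - 1) * ((b.1 - a.1) * a.2 - (b.2 - a.2) * a.1) := by
      rw [hu, hv]
      simp only [det2, Prod.fst_add, Prod.snd_add, Prod.smul_fst, Prod.smul_snd, smul_eq_mul]
      ring
    have e2 : (v / (v - u)) + (-u / (v - u)) - 1 = 0 := by field_simp; ring
    change det2 a b _ = 0
    rw [e, e2]
    field_simp
    ring
  · field_simp; ring

theorem quad_aux {a b c d : Pt} (h1 : 0 < det2 a b c) (h2 : 0 < det2 a b d)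
    (h3 : 0 < det2 c d a) (h4 : 0 < det2 c d b) :
    dist (toC a) (toC b) + dist (toC c) (toC d)
      < dist (toC a) (toC c) + dist (toC b) (toC d) := by
  have hsum : det2 a b d + det2 c d b = det2 a b c + det2 c d a := by
    simp only [det2]; ring
  have hS : 0 < det2 a b d + det2 c d b := by linarith
  set S := det2 a b d + det2 c d b with hSdef
  set t := det2 a b d / S with ht
  set s := det2 a b c / S with hs
  have ht0 : 0 < t := div_pos h2 hS
  have ht1 : t ≤ 1 := by rw [ht, div_le_one hS]; linarith
  have hs0 : 0 < s := div_pos h1 hS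
  have hs1 : s ≤ 1 := by rw [hs, div_le_one hS]; linarith
  set x : ℂ := AffineMap.lineMap (toC a) (toC c) t with hx
  have hx2 : x = AffineMap.lineMap (toC b) (toC d) s := by
    rw [hx, AffineMap.lineMap_apply, AffineMap.lineMap_apply]
    apply Complex.ext
    · simp [toC]
      rw [ht, hs]
      field_simp
      rw [hSdef]; simp only [det2]; ring
    · simp [toC]
      rw [ht, hs]
      field_simp
      rw [hSdef]; simp only [det2]; ring
  have w1 : Wbtw ℝ (toC a) x (toC c) := ⟨t, ⟨ht0.le, ht1⟩, rfl⟩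
  have w2 : Wbtw ℝ (toC b) x (toC d) := ⟨s, ⟨hs0.le, hs1⟩, hx2.symm⟩
  have d1 := w1.dist_add_dist
  have d2 := w2.dist_add_dist
  have d3 : dist (toC a) (toC b) < dist (toC a) x + dist x (toC b) := by
    rw [dist_lt_dist_add_dist_iff]
    rintro ⟨r, -, hr⟩
    rw [hx, AffineMap.lineMap_apply, AffineMap.lineMap_apply] at hr
    have e1 := congrArg Complex.re hr
    have e2 := congrArg Complex.im hr
    simp [toC] at e1 e2
    have : t * det2 a b c = 0 := by
      simp only [det2]
      linear_combination (b.2 - a.2) * e1 - (b.1 - a.1) * e2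
    exact (mul_pos ht0 h1).ne' this
  have d4 := dist_triangle (toC c) x (toC d)
  rw [dist_comm x (toC b)] at d3
  rw [dist_comm (toC c) x] at d4
  linarith

theorem det2_swap12 (a b c : Pt) : det2 b a c = - det2 a b c := det2_antisymm a b c

theorem quad_same {a b c d : Pt} (h1 : 0 < det2 a b c * det2 a b d)
    (h2 : 0 < det2 c d a * det2 c d b) (h3 : 0 < det2 a b c * det2 c d a) :
    dist (toC a) (toC b) + dist (toC c) (toC d)
      < dist (toC a) (toC c) + dist (toC b) (toC d) := by
  rcases lt_or_ge 0 (det2 a b c) with h | h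
  · have ha := (pos_iff_pos_of_mul_pos h1).1 h
    have hc := (pos_iff_pos_of_mul_pos h3).1 h
    exact quad_aux h ha hc ((pos_iff_pos_of_mul_pos h2).1 hc)
  · have h : det2 a b c < 0 := lt_of_le_of_ne h (fun e => by simp [e] at h1)
    have ha := (neg_iff_neg_of_mul_pos h1).1 h
    have hc := (neg_iff_neg_of_mul_pos h3).1 h
    have hd := (neg_iff_neg_of_mul_pos h2).1 hc
    have := @quad_aux b a d c (by rw [det2_swap12]; linarith) (by rw [det2_swap12]; linarith)
      (by rw [det2_swap12]; linarith) (by rw [det2_swap12]; linarith)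
    rw [dist_comm (toC b) (toC a), dist_comm (toC d) (toC c)] at this
    linarith

/-- Two segments that do not stab each other are opposite sides of a convex quadrilateral,
so exchanging endpoints increases the length. -/
theorem stab_of_max {P : Set Pt} (h : GenPos P) {a b c d : Pt}
    (ha : a ∈ P) (hb : b ∈ P) (hc : c ∈ P) (hd : d ∈ P)
    (hab : a ≠ b) (hac : a ≠ c) (had : a ≠ d) (hbc : b ≠ c) (hbd : b ≠ d) (hcd : c ≠ d)
    (m1 : dist (toC a) (toC c) + dist (toC b) (toC d)
      ≤ dist (toC a) (toC b) + dist (toC c) (toC d))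
    (m2 : dist (toC a) (toC d) + dist (toC b) (toC c)
      ≤ dist (toC a) (toC b) + dist (toC c) (toC d)) :
    (lineThrough a b ∩ openSegment ℝ c d).Nonempty ∨
      (lineThrough c d ∩ openSegment ℝ a b).Nonempty := by
  have n1 := det2_ne_zero_of_genPos h ha hb hc hab hac hbc
  have n2 := det2_ne_zero_of_genPos h ha hb hd hab had hbd
  have n3 := det2_ne_zero_of_genPos h hc hd ha hcd hac.symm had.symm
  have n4 := det2_ne_zero_of_genPos h hc hd hb hcd hbc.symm hbd.symm
  by_contra hcon
  rw [not_or] at hcon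
  have p1 : 0 < det2 a b c * det2 a b d :=
    lt_of_le_of_ne (not_lt.1 fun hh => hcon.1 (stab_of_neg hh)) (mul_ne_zero n1 n2).symm
  have p2 : 0 < det2 c d a * det2 c d b :=
    lt_of_le_of_ne (not_lt.1 fun hh => hcon.2 (stab_of_neg hh)) (mul_ne_zero n3 n4).symm
  rcases lt_or_gt_of_ne (mul_ne_zero n1 n3) with h3 | h3
  · have h4 : 0 < det2 a b d * det2 d c a := by
      rw [det2_swap12 c d a]
      rcases mul_neg_iff.1 h3 with ⟨q1, q2⟩ | ⟨q1, q2⟩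
      · exact mul_pos ((pos_iff_pos_of_mul_pos p1).1 q1) (by linarith)
      · exact mul_pos_of_neg_of_neg ((neg_iff_neg_of_mul_pos p1).1 q1) (by linarith)
    have := quad_same (a := a) (b := b) (c := d) (d := c) (by linarith)
      (by rw [det2_swap12 c d a, det2_swap12 c d b]; linarith) h4
    rw [dist_comm (toC d) (toC c)] at this
    linarith
  · have := quad_same p1 p2 h3
    linarith

/-- Effect of exchanging two values on a sum that depends on two indices only. -/
theorem sum_le_imp {n : ℕ} {f g : Fin n → ℝ} {i j : Fin n} (hij : i ≠ j)
    (heq : ∀ k, k ≠ i → k ≠ j → f k = g k) (hle : ∑ k, f k ≤ ∑ k, g k) :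
    f i + f j ≤ g i + g j := by
  have hs : ∑ k, (g k - f k) = (g i - f i) + (g j - f j) := by
    rw [← Finset.sum_pair (f := fun k => g k - f k) hij]
    symm
    apply Finset.sum_subset (Finset.subset_univ _)
    intro k _ hk
    simp only [Finset.mem_insert, Finset.mem_singleton, not_or] at hk
    rw [heq k hk.1 hk.2, sub_self]
  rw [Finset.sum_sub_distrib] at hs
  linarith

theorem exists_stabbing_perfect_matching
    (n : ℕ) (hn : 0 < n) (P : Finset Pt) (hcard : P.card = 2 * n)
    (hgen : GenPos ↑P) :
    ∃ F : Finset (Sym2 Pt), F.card = n ∧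
      (∀ s ∈ F, ∀ x ∈ s, x ∈ P) ∧
      (∀ p ∈ P, ∃ s ∈ F, p ∈ s) ∧
      IsStabbingFamily F := by
  classical
  have hne : Nonempty (Fin n × Bool ≃ P) := by
    apply Fintype.card_eq.1
    simp [hcard, mul_comm]
  let w : (Fin n × Bool ≃ P) → ℝ := fun f =>
    ∑ i, dist (toC (f (i, false))) (toC (f (i, true)))
  obtain ⟨f, hf⟩ := Finite.exists_max w
  let e : Fin n → Sym2 Pt := fun i => s((f (i, false) : Pt), (f (i, true) : Pt))
  have hinj : ∀ x y : Fin n × Bool, x ≠ y → (f x : Pt) ≠ f y := by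
    intro x y hxy h
    exact hxy (f.injective (Subtype.ext h))
  have hdisj : ∀ i j, i ≠ j → ∀ x ∈ e i, ∀ y ∈ e j, x ≠ y := by
    intro i j hij x hx y hy
    simp only [e, Sym2.mem_iff] at hx hy
    rcases hx with rfl | rfl <;> rcases hy with rfl | rfl <;>
      exact hinj _ _ (by simp [hij])
  have heinj : Function.Injective e := by
    intro i j h
    by_contra hij
    exact hdisj i j hij (f (i, false)) (by simp [e]) (f (i, false))
      (by rw [← h]; simp [e]) rfl
  refine ⟨Finset.univ.image e, ?_, ?_, ?_, ?_, ?_, ?_⟩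
  · rw [Finset.card_image_of_injective _ heinj]; simp
  · intro s hs x hx
    obtain ⟨i, -, rfl⟩ := Finset.mem_image.1 hs
    simp only [e, Sym2.mem_iff] at hx
    rcases hx with rfl | rfl <;> exact (f _).2
  · intro p hp
    obtain ⟨⟨i, b⟩, hb⟩ := f.surjective ⟨p, hp⟩
    refine ⟨e i, Finset.mem_image_of_mem _ (Finset.mem_univ _), ?_⟩
    have : p = f (i, b) := by rw [hb]
    cases b <;> simp [e, this]
  · intro s hs
    obtain ⟨i, -, rfl⟩ := Finset.mem_image.1 hs
    simp only [e, Sym2.mk_isDiag_iff]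
    exact hinj _ _ (by simp)
  · intro s hs t ht hst
    obtain ⟨i, -, rfl⟩ := Finset.mem_image.1 hs
    obtain ⟨j, -, rfl⟩ := Finset.mem_image.1 ht
    exact hdisj i j (fun h => hst (by rw [h]))
  · intro s hs t ht hst
    obtain ⟨i, -, rfl⟩ := Finset.mem_image.1 hs
    obtain ⟨j, -, rfl⟩ := Finset.mem_image.1 ht
    have hij : i ≠ j := fun h => hst (by rw [h])
    have hji := hij.symm
    have m1 := sum_le_imp hij (f := fun k =>
        dist (toC ((Equiv.swap (i, true) (j, false)).trans f (k, false)))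
          (toC ((Equiv.swap (i, true) (j, false)).trans f (k, true))))
      (fun k hki hkj => by simp [Equiv.swap_apply_def, hki, hkj])
      (hf ((Equiv.swap (i, true) (j, false)).trans f))
    have m2 := sum_le_imp hij (f := fun k =>
        dist (toC ((Equiv.swap (i, true) (j, true)).trans f (k, false)))
          (toC ((Equiv.swap (i, true) (j, true)).trans f (k, true))))
      (fun k hki hkj => by simp [Equiv.swap_apply_def, hki, hkj])
      (hf ((Equiv.swap (i, true) (j, true)).trans f))
    simp [Equiv.swap_apply_def, hij, hji] at m1 m2
    refine stab_of_max hgen (f _).2 (f _).2 (f _).2 (f _).2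
      (hinj _ _ (by simp)) (hinj _ _ (by simp [hij])) (hinj _ _ (by simp [hij]))
      (hinj _ _ (by simp [hij])) (hinj _ _ (by simp [hij])) (hinj _ _ (by simp)) m1 ?_
    rw [dist_comm (toC (f (i, true)))]
    exact m2
end
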